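/- In the setting below, assume additionally that the closure of Per_H equals M and that δ ∈ (0, ν) is such that X_δ has finitely many maximal chains that are pairwise disjoint, each accumulating at x. Then for every p ∈ X_δ, writing [p] for the maximal chain of X_δ containing p and S_{[p]} = closure(⋃_{q∈[p]} Ŝ_q), one has int(S_{[p]}) ∩ B_δ(x) = (⋃_{q∈[p]} Ŝ_q) ∩ B_δ(x). -/

import Mathlib

open Metric Set

variable {M : Type*} [MetricSpace M]

/-- Iterates of a homeomorphism, indexed by `ℤ`. -/
def iterZ (f : M ≃ₜ M) (k : ℤ) (x : M) : M := (f.toEquiv ^ k) x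

/-- `f` is expansive with expansivity constant `α`. -/
def IsExpansive (f : M ≃ₜ M) (α : ℝ) : Prop :=
  ∀ x y : M, x ≠ y → ∃ k : ℤ, α < dist (iterZ f k x) (iterZ f k y)

/-- Stable set of `x`. -/
def Ws (f : M ≃ₜ M) (x : M) : Set M :=
  {y | Filter.Tendsto (fun k : ℤ => dist (iterZ f k x) (iterZ f k y)) Filter.atTop (nhds 0)}

/-- Unstable set of `x`. -/
def Wu (f : M ≃ₜ M) (x : M) : Set M :=
  {y | Filter.Tendsto (fun k : ℤ => dist (iterZ f k x) (iterZ f k y)) Filter.atBot (nhds 0)}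

/-- Local (`ε`-local) stable set of `x`. -/
def WsLoc (f : M ≃ₜ M) (ε : ℝ) (x : M) : Set M :=
  {y | ∀ k : ℤ, 0 ≤ k → dist (iterZ f k x) (iterZ f k y) ≤ ε}

/-- Local (`ε`-local) unstable set of `x`. -/
def WuLoc (f : M ≃ₜ M) (ε : ℝ) (x : M) : Set M :=
  {y | ∀ k : ℤ, k ≤ 0 → dist (iterZ f k x) (iterZ f k y) ≤ ε}

/-- The model space `ℝ^r × ℝ^{n-r}`. -/
abbrev ModelSp (n r : ℕ) := (Fin r → ℝ) × (Fin (n - r) → ℝ)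

/-- The model hyperbolic linear map `L(a,b) = (a/2, 2b)`. -/
noncomputable def modelL (n r : ℕ) : ModelSp n r → ModelSp n r :=
  fun q => (fun i => q.1 i / 2, fun i => 2 * q.2 i)

/-- Topologically hyperbolic periodic points of index `r` (`Per_H^r`). -/
def PerHr (f : M ≃ₜ M) (n r : ℕ) : Set M :=
  {p | ∃ l : ℕ, 1 ≤ l ∧ (f.toEquiv ^ l) p = p ∧
    ∃ (U : Set M) (V : Set (ModelSp n r)) (h : U ≃ₜ V),
      IsOpen U ∧ IsOpen V ∧ (0 : ModelSp n r) ∈ V ∧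
      ∃ hp : p ∈ U, ((h ⟨p, hp⟩ : V) : ModelSp n r) = 0 ∧
        ∀ z : M, ∀ hz : z ∈ U, ∀ hz' : (f.toEquiv ^ l) z ∈ U,
          ((h ⟨(f.toEquiv ^ l) z, hz'⟩ : V) : ModelSp n r) = modelL n r (h ⟨z, hz⟩)}

/-- All topologically hyperbolic periodic points (`Per_H`). -/
def PerH (f : M ≃ₜ M) (n : ℕ) : Set M := ⋃ r ∈ Finset.range (n + 1), PerHr f n r

/-- `p` admits a local product structure. -/
def AdmitsLPS (f : M ≃ₜ M) (n : ℕ) (p : M) : Prop :=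
  ∃ (k : ℕ) (h : (Fin k → ℝ) × (Fin (n - k) → ℝ) → M) (ε : ℝ),
    0 < ε ∧ Topology.IsEmbedding h ∧ p ∈ Set.range h ∧
    ∀ x : Fin k → ℝ, ∀ y : Fin (n - k) → ℝ,
      h '' ({x} ×ˢ univ) = WsLoc f ε (h (x, y)) ∩ Set.range h ∧
      h '' (univ ×ˢ {y}) = WuLoc f ε (h (x, y)) ∩ Set.range h

/-- `D` has exactly two connected components, namely `V₁` and `V₂`. -/
def TwoComponents {M : Type*} [TopologicalSpace M] (D V₁ V₂ : Set M) : Prop :=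
  V₁ ≠ V₂ ∧
  (∀ y ∈ D, connectedComponentIn D y = V₁ ∨ connectedComponentIn D y = V₂) ∧
  (∃ y ∈ D, connectedComponentIn D y = V₁) ∧ (∃ y ∈ D, connectedComponentIn D y = V₂)

variable {M : Type*} [MetricSpace M]

/-- `S_p = cc_p(W^s(p) ∩ B_ν(x))`. -/
def SpSet (f : M ≃ₜ M) (x : M) (ν : ℝ) (p : M) : Set M :=
  connectedComponentIn (Ws f p ∩ Metric.ball x ν) p

/-- `U_p = cc_p(W^u(p) ∩ B_ν(x))`. -/
def UpSet (f : M ≃ₜ M) (x : M) (ν : ℝ) (p : M) : Set M :=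
  connectedComponentIn (Wu f p ∩ Metric.ball x ν) p

/-- `Ŝ_p = B_ν(x) \ cc_x(B_ν(x) \ S_p)`. -/
def ShatSet (f : M ≃ₜ M) (x : M) (ν : ℝ) (p : M) : Set M :=
  Metric.ball x ν \ connectedComponentIn (Metric.ball x ν \ SpSet f x ν p) x

/-- `X_δ = Per_H^{n-1} ∩ B_δ(x)`. -/
def Xdelta (f : M ≃ₜ M) (n : ℕ) (x : M) (δ : ℝ) : Set M :=
  PerHr f n (n - 1) ∩ Metric.ball x δ

/-- `C` is a chain of `(X_δ, ≤)`, where `p ≤ q ↔ Ŝ_p ⊆ Ŝ_q`. -/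
def IsChainIn (f : M ≃ₜ M) (n : ℕ) (x : M) (ν δ : ℝ) (C : Set M) : Prop :=
  C ⊆ Xdelta f n x δ ∧
  ∀ p ∈ C, ∀ q ∈ C, ShatSet f x ν p ⊆ ShatSet f x ν q ∨ ShatSet f x ν q ⊆ ShatSet f x ν p

/-- `C` is a maximal chain of `(X_δ, ≤)`. -/
def IsMaxChainIn (f : M ≃ₜ M) (n : ℕ) (x : M) (ν δ : ℝ) (C : Set M) : Prop :=
  IsChainIn f n x ν δ C ∧ ∀ C' : Set M, IsChainIn f n x ν δ C' → C ⊆ C' → C' = C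

open Filter Topology

lemma iterZ_add (f : M ≃ₜ M) (a b : ℤ) (x : M) :
    iterZ f (a + b) x = iterZ f a (iterZ f b x) := by
  simp [iterZ, zpow_add]

lemma iterZ_zero (f : M ≃ₜ M) (x : M) : iterZ f 0 x = x := by
  simp [iterZ]

lemma iterZ_natCast (f : M ≃ₜ M) (l : ℕ) (x : M) : iterZ f (l : ℤ) x = (f.toEquiv ^ l) x := by
  simp [iterZ]

lemma iterZ_symm (f : M ≃ₜ M) (k : ℤ) (x : M) : iterZ f.symm k x = iterZ f (-k) x := by
  have : f.symm.toEquiv = (f.toEquiv : Equiv.Perm M)⁻¹ := rfl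
  unfold iterZ
  rw [this, inv_zpow, zpow_neg]

lemma iterZ_cont_nat (f : M ≃ₜ M) (k : ℕ) : Continuous (iterZ f (k : ℤ)) := by
  induction k with
  | zero => 
    have : iterZ f ((0 : ℕ) : ℤ) = id := by
      funext x; simp [iterZ]
    rw [this]; exact continuous_id
  | succ k ih =>
    have : iterZ f ((k + 1 : ℕ) : ℤ) = fun x => iterZ f k (f x) := by
      funext x
      push_cast
      rw [iterZ_add]
      simp [iterZ]
    rw [this]; exact ih.comp f.continuous

lemma iterZ_cont (f : M ≃ₜ M) (k : ℤ) : Continuous (iterZ f k) := by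
  obtain ⟨m, rfl | rfl⟩ := k.eq_nat_or_neg
  · exact iterZ_cont_nat f m
  · have : iterZ f (-(m : ℤ)) = iterZ f.symm m := by
      funext x; rw [iterZ_symm]
    rw [this]; exact iterZ_cont_nat _ m

lemma iterZ_mul_fix (f : M ≃ₜ M) (l : ℤ) (p : M) (hp : iterZ f l p = p) (m : ℕ) :
    iterZ f (l * m) p = p := by
  induction m with
  | zero => simp [iterZ]
  | succ m ih =>
    have : l * ((m + 1 : ℕ) : ℤ) = l * m + l := by push_cast; ring
    rw [this, iterZ_add, hp, ih]

lemma mem_Wu_iff (f : M ≃ₜ M) (x y : M) : y ∈ Wu f x ↔ y ∈ Ws f.symm x := by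
  simp only [Wu, Ws, mem_ofPred_eq, iterZ_symm]
  constructor
  · intro h
    exact h.comp tendsto_neg_atTop_atBot
  · intro h
    have := h.comp tendsto_neg_atBot_atTop
    simpa [Function.comp_def] using this

lemma self_mem_Ws (f : M ≃ₜ M) (x : M) : x ∈ Ws f x := by
  simp [Ws]

lemma self_mem_Wu (f : M ≃ₜ M) (x : M) : x ∈ Wu f x := by
  simp [Wu]

lemma Ws_common (f : M ≃ₜ M) {p q s : M} (h1 : s ∈ Ws f p) (h2 : s ∈ Ws f q) : q ∈ Ws f p := by
  have h : Tendsto (fun k : ℤ => dist (iterZ f k p) (iterZ f k s) +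
      dist (iterZ f k q) (iterZ f k s)) atTop (𝓝 (0 + 0)) := Tendsto.add h1 h2
  rw [add_zero] at h
  refine squeeze_zero (fun _ => dist_nonneg) (fun k => ?_) h
  exact dist_triangle_right _ _ _

lemma periodic_Ws_eq (f : M ≃ₜ M) {p q : M} {l1 l2 : ℕ} (h1 : 1 ≤ l1) (h2 : 1 ≤ l2)
    (hp : iterZ f l1 p = p) (hq : iterZ f l2 q = q) (h : q ∈ Ws f p) : p = q := by
  have hp' : ∀ m : ℕ, iterZ f ((l1 * l2 * m : ℕ) : ℤ) p = p := by
    intro m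
    have := iterZ_mul_fix f l1 p hp (l2 * m)
    convert this using 2
    push_cast; ring
  have hq' : ∀ m : ℕ, iterZ f ((l1 * l2 * m : ℕ) : ℤ) q = q := by
    intro m
    have := iterZ_mul_fix f l2 q hq (l1 * m)
    convert this using 2
    push_cast; ring
  have ht : Tendsto (fun m : ℕ => ((l1 * l2 * m : ℕ) : ℤ)) atTop atTop := by
    refine tendsto_natCast_atTop_atTop.comp ?_
    exact tendsto_id.const_mul_atTop' (by positivity)
  have := Tendsto.comp h ht
  simp only [Function.comp_def, hp', hq'] at this
  exact dist_eq_zero.1 (tendsto_nhds_unique tendsto_const_nhds this)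

lemma WsLoc_sub_Ws [CompactSpace M] (f : M ≃ₜ M) {α ε : ℝ} (hexp : IsExpansive f α) (hε : ε < α)
    (x : M) : WsLoc f ε x ⊆ Ws f x := by
  intro y hy
  by_contra hcon
  simp only [Ws, mem_ofPred_eq, Metric.tendsto_nhds, not_forall] at hcon
  obtain ⟨η, hη, hf⟩ := hcon
  have hf' : ∃ᶠ k : ℤ in atTop, η ≤ dist (iterZ f k x) (iterZ f k y) := by
    refine (Filter.not_eventually.1 hf).mono ?_
    intro k hk
    simpa [Real.dist_eq] using hk
  have hs : ∀ m : ℕ, ∃ k : ℤ, (m : ℤ) ≤ k ∧ η ≤ dist (iterZ f k x) (iterZ f k y) := by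
    intro m
    obtain ⟨k, hk, hk'⟩ := (frequently_atTop.1 hf') m
    exact ⟨k, hk, hk'⟩
  choose k hk hkη using hs
  obtain ⟨⟨a, b⟩, -, φ, hφ, hlim⟩ := isCompact_univ.tendsto_subseq
    (x := fun m : ℕ => ((iterZ f (k m) x, iterZ f (k m) y) : M × M)) (fun _ => mem_univ _)
  have ha : Tendsto (fun m => iterZ f (k (φ m)) x) atTop (𝓝 a) :=
    (continuous_fst.tendsto _).comp hlim
  have hb : Tendsto (fun m => iterZ f (k (φ m)) y) atTop (𝓝 b) :=
    (continuous_snd.tendsto _).comp hlim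
  have hab : η ≤ dist a b := ge_of_tendsto' (ha.dist hb) (fun m => hkη _)
  have hne : a ≠ b := by
    rintro rfl
    rw [dist_self] at hab; linarith
  obtain ⟨j, hj⟩ := hexp a b hne
  have hja := ((iterZ_cont f j).tendsto a).comp ha
  have hjb := ((iterZ_cont f j).tendsto b).comp hb
  have : dist (iterZ f j a) (iterZ f j b) ≤ ε := by
    refine le_of_tendsto (hja.dist hjb) ?_
    filter_upwards [eventually_ge_atTop (-j).toNat] with m hm
    simp only [Function.comp_def, ← iterZ_add]
    apply hy
    have h1 := hk (φ m)
    have h2 := hφ.id_le m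
    simp only [id] at h2
    omega
  linarith

lemma mem_Ws_of_tendsto (f : M ≃ₜ M) {p z : M} {l : ℕ} (hl : 1 ≤ l) (hp : iterZ f l p = p)
    (h : Tendsto (fun m : ℕ => iterZ f ((l : ℤ) * m) z) atTop (𝓝 p)) : z ∈ Ws f p := by
  rw [Ws, mem_ofPred_eq, Metric.tendsto_nhds]
  intro η hη
  have h1 : ∀ j ∈ Finset.range l, ∀ᶠ m : ℕ in atTop,
      dist (iterZ f j p) (iterZ f j (iterZ f ((l : ℤ) * m) z)) < η := by
    intro j _
    have := ((tendsto_const_nhds (x := iterZ f j p)).dist (((iterZ_cont f j).tendsto p).comp h))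
    rw [dist_self] at this
    exact this.eventually (gt_mem_nhds hη)
  have h2 := (Filter.eventually_all_finset (Finset.range l)).2 h1
  obtain ⟨N, hN⟩ := eventually_atTop.1 h2
  filter_upwards [eventually_ge_atTop ((l : ℤ) * N)] with k hk
  have hl0 : (0 : ℤ) < l := by exact_mod_cast hl
  have hq : (N : ℤ) ≤ k / l := by
    rw [Int.le_ediv_iff_mul_le hl0]; linarith
  obtain ⟨m, hm⟩ := Int.eq_ofNat_of_zero_le (le_trans (by positivity) hq)
  obtain ⟨j, hj⟩ := Int.eq_ofNat_of_zero_le (Int.emod_nonneg k hl0.ne')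
  have hjl : j < l := by
    have := Int.emod_lt_of_pos k hl0
    rw [hj] at this; exact_mod_cast this
  have hkk : k = j + l * m := by
    have := Int.emod_add_mul_ediv k l
    rw [hj, hm] at this; exact this.symm
  have := hN m (by rw [hm] at hq; exact_mod_cast hq) j (Finset.mem_range.2 hjl)
  rw [hkk, iterZ_add, iterZ_add, iterZ_mul_fix f l p hp, Real.dist_eq, sub_zero,
    abs_of_nonneg dist_nonneg]
  exact this

lemma modelL_inj (n r : ℕ) : Function.Injective (modelL n r) := by
  intro a b h
  simp only [modelL, Prod.mk.injEq] at h
  refine Prod.ext (funext fun i => ?_) (funext fun i => ?_)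
  · have := congrFun h.1 i
    linarith
  · have := congrFun h.2 i
    linarith

lemma PerHr_periodic (f : M ≃ₜ M) {n r : ℕ} {p : M} (hp : p ∈ PerHr f n r) :
    ∃ l : ℕ, 1 ≤ l ∧ iterZ f l p = p := by
  obtain ⟨l, hl, h, -⟩ := hp
  exact ⟨l, hl, by rw [iterZ_natCast]; exact h⟩

lemma chart_lemma (f : M ≃ₜ M) {n r : ℕ} {p : M} (hp : p ∈ PerHr f n r) :
    ∃ l : ℕ, 1 ≤ l ∧ iterZ f l p = p ∧ ∃ (φ : ModelSp n r → M) (R : ℝ), 0 < R ∧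
      ContinuousOn φ (closedBall 0 R) ∧ φ 0 = p ∧ InjOn φ (closedBall 0 R) ∧
      (∀ v ∈ closedBall (0 : ModelSp n r) R, ∀ w, modelL n r w = v →
        iterZ f (-l) (φ v) = φ w) ∧
      (∀ v ∈ closedBall (0 : ModelSp n r) R, iterZ f l (φ v) = φ (modelL n r v)) ∧
      φ '' (closedBall 0 R) ∈ 𝓝 p := by
  classical
  obtain ⟨l, hl, hfix, U, V, h, hU, hV, h0, hpU, hp0, hconj⟩ := hp
  have hfix' : iterZ f l p = p := by rw [iterZ_natCast]; exact hfix
  have hfixn : iterZ f (-l) p = p := by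
    conv_lhs => rw [← hfix']
    rw [← iterZ_add]; simp [iterZ]
  refine ⟨l, hl, hfix', ?_⟩
  set φ : ModelSp n r → M := fun v => if hv : v ∈ V then (h.symm ⟨v, hv⟩ : M) else p with hφ
  have hφV : ∀ v (hv : v ∈ V), φ v = h.symm ⟨v, hv⟩ := fun v hv => by simp [hφ, hv]
  have hφU : ∀ v ∈ V, φ v ∈ U := fun v hv => by rw [hφV v hv]; exact (h.symm ⟨v, hv⟩).2
  have hhφ : ∀ v (hv : v ∈ V) (hz : φ v ∈ U), (h ⟨φ v, hz⟩ : ModelSp n r) = v := by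
    intro v hv hz
    have : (⟨φ v, hz⟩ : U) = h.symm ⟨v, hv⟩ := Subtype.ext (hφV v hv)
    rw [this]; simp
  have hφh : ∀ z (hz : z ∈ U), φ (h ⟨z, hz⟩) = z := by
    intro z hz
    rw [hφV _ (h ⟨z, hz⟩).2]; simp
  have hcont : ContinuousOn φ V := by
    rw [continuousOn_iff_continuous_domRestrict]
    have : V.domRestrict φ = fun v => (h.symm v : M) := by
      funext v; simp [Set.domRestrict, hφV v.1 v.2]
    rw [this]
    exact continuous_subtype_val.comp h.symm.continuous
  have hφ0 : φ 0 = p := by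
    have := hφh p hpU
    rw [hp0] at this; exact this
  have hc0 : ContinuousAt φ 0 := hcont.continuousAt (hV.mem_nhds h0)
  have e1 : ∀ᶠ v in 𝓝 (0 : ModelSp n r), v ∈ V := hV.mem_nhds h0
  have e2 : ∀ᶠ v in 𝓝 (0 : ModelSp n r), iterZ f l (φ v) ∈ U := by
    have : Tendsto (fun v => iterZ f l (φ v)) (𝓝 0) (𝓝 p) := by
      have := ((iterZ_cont f l).tendsto (φ 0)).comp hc0
      rwa [hφ0, hfix'] at this
    exact this.eventually (hU.mem_nhds hpU)
  have e3 : ∀ᶠ v in 𝓝 (0 : ModelSp n r), iterZ f (-l) (φ v) ∈ U := by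
    have : Tendsto (fun v => iterZ f (-l) (φ v)) (𝓝 0) (𝓝 p) := by
      have := ((iterZ_cont f (-l)).tendsto (φ 0)).comp hc0
      rwa [hφ0, hfixn] at this
    exact this.eventually (hU.mem_nhds hpU)
  obtain ⟨R, hR, hRs⟩ := Metric.nhds_basis_closedBall.mem_iff.1 (e1.and (e2.and e3))
  refine ⟨φ, R, hR, hcont.mono (fun v hv => (hRs hv).1), hφ0, ?_, ?_, ?_, ?_⟩
  · intro v hv w hw hvw
    have hv' := (hRs hv).1
    have hw' := (hRs hw).1
    rw [← hhφ v hv' (hφU v hv'), ← hhφ w hw' (hφU w hw')]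
    simp only [hvw]
  · intro v hv w hwv
    obtain ⟨hv1, hv2, hv3⟩ := hRs hv
    have hz : (f.toEquiv ^ l) (iterZ f (-l) (φ v)) = φ v := by
      rw [← iterZ_natCast, ← iterZ_add]; simp [iterZ]
    have hz' : (f.toEquiv ^ l) (iterZ f (-l) (φ v)) ∈ U := by rw [hz]; exact hφU v hv1
    have := hconj _ hv3 hz'
    simp only [hz] at this
    rw [hhφ v hv1] at this
    rw [this] at hwv
    rw [modelL_inj n r hwv, hφh]
  · intro v hv
    obtain ⟨hv1, hv2, hv3⟩ := hRs hv
    have hv2' := hv2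
    rw [iterZ_natCast] at hv2'
    have := hconj _ (hφU v hv1) hv2'
    rw [hhφ v hv1] at this
    rw [← this, hφh, iterZ_natCast]
  · have ho : IsOpen (φ '' (ball 0 R)) := by
      have : φ '' (ball 0 R) = Subtype.val '' (h.symm '' (Subtype.val ⁻¹' (ball 0 R))) := by
        ext z
        constructor
        · rintro ⟨v, hv, rfl⟩
          have hv1 := (hRs (ball_subset_closedBall hv)).1
          exact ⟨_, ⟨⟨v, hv1⟩, hv, rfl⟩, (hφV v hv1).symm⟩
        · rintro ⟨_, ⟨v, hv, rfl⟩, rfl⟩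
          exact ⟨v, hv, hφV v.1 v.2⟩
      rw [this]
      exact hU.isOpenMap_subtype_val _ (h.symm.isOpenMap _ (isOpen_ball.preimage continuous_subtype_val))
    exact mem_of_superset (ho.mem_nhds ⟨0, mem_ball_self hR, hφ0⟩) (image_mono ball_subset_closedBall)


lemma iter_half (f : M ≃ₜ M) {E : Type*} [NormedAddCommGroup E] [NormedSpace ℝ E]
    (φ : E → M) (l : ℤ) (R : ℝ) (P : E → Prop)
    (hP : ∀ v, P v → P ((1 / 2 : ℝ) • v))
    (h : ∀ v ∈ closedBall (0 : E) R, P v → iterZ f l (φ v) = φ ((1 / 2 : ℝ) • v))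
    (v : E) (hv : v ∈ closedBall (0 : E) R) (hPv : P v) (m : ℕ) :
    iterZ f (l * m) (φ v) = φ ((1 / 2 : ℝ) ^ m • v) := by
  have key : ∀ m : ℕ, iterZ f (l * m) (φ v) = φ ((1 / 2 : ℝ) ^ m • v) ∧
      P ((1 / 2 : ℝ) ^ m • v) ∧ (1 / 2 : ℝ) ^ m • v ∈ closedBall (0 : E) R := by
    intro m
    induction m with
    | zero => simpa [iterZ, -mem_closedBall] using And.intro hPv hv
    | succ m ih =>
      obtain ⟨h1, h2, h3⟩ := ih
      have e : (1 / 2 : ℝ) ^ (m + 1) • v = (1 / 2 : ℝ) • ((1 / 2 : ℝ) ^ m • v) := by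
        rw [smul_smul]; congr 1; ring
      refine ⟨?_, ?_, ?_⟩
      · have : l * ((m + 1 : ℕ) : ℤ) = l + l * m := by push_cast; ring
        rw [this, iterZ_add, h1, h _ h3 h2, e]
      · rw [e]; exact hP _ h2
      · rw [e, mem_closedBall_zero_iff, norm_smul]
        rw [mem_closedBall_zero_iff] at h3
        have := norm_nonneg ((1 / 2 : ℝ) ^ m • v)
        have e2 : ‖(1 / 2 : ℝ)‖ = 1 / 2 := by norm_num
        rw [e2]
        linarith
  exact (key m).1

lemma tendsto_half {E : Type*} [NormedAddCommGroup E] [NormedSpace ℝ E]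
    (φ : E → M) (R : ℝ) (hR : 0 < R) (hc : ContinuousOn φ (closedBall 0 R)) (v : E) :
    Tendsto (fun m : ℕ => φ ((1 / 2 : ℝ) ^ m • v)) atTop (𝓝 (φ 0)) := by
  have h1 : Tendsto (fun m : ℕ => (1 / 2 : ℝ) ^ m • v) atTop (𝓝 0) := by
    have := (tendsto_pow_atTop_nhds_zero_of_lt_one (r := (1 / 2 : ℝ)) (by norm_num)
      (by norm_num)).smul_const v
    rwa [zero_smul] at this
  have h2 : ContinuousAt φ 0 := hc.continuousAt (closedBall_mem_nhds _ hR)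
  exact h2.tendsto.comp h1

/-- The stable set of a sink is open. -/
lemma sink_open (f : M ≃ₜ M) {n r : ℕ} (hr : n ≤ r) {p : M} (hp : p ∈ PerHr f n r) :
    IsOpen (Ws f p) := by
  obtain ⟨l, hl, hfix, φ, R, hR, hc, h0, hinj, hback, hfwd, hnhd⟩ := chart_lemma f hp
  have hsub : φ '' (closedBall 0 R) ⊆ Ws f p := by
    rintro _ ⟨v, hv, rfl⟩
    apply mem_Ws_of_tendsto f hl hfix
    have : ∀ m : ℕ, iterZ f ((l : ℤ) * m) (φ v) = φ ((1 / 2 : ℝ) ^ m • v) := by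
      intro m
      refine iter_half f φ l R (fun _ => True) (fun _ _ => trivial) ?_ v hv trivial m
      intro w hw _
      rw [hfwd w hw]
      congr 1
      refine Prod.ext (funext fun i => ?_) (funext fun i => ?_)
      · simp only [modelL, Prod.smul_fst, Pi.smul_apply, smul_eq_mul]; ring
      · have := i.2; omega
    simp only [this]
    rw [← h0]
    exact tendsto_half φ R hR hc v
  rw [isOpen_iff_mem_nhds]
  intro z hz
  have ht : Tendsto (fun m : ℕ => (l : ℤ) * m) atTop atTop := by
    refine Tendsto.const_mul_atTop' (by exact_mod_cast hl) tendsto_natCast_atTop_atTop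
  have h1 : Tendsto (fun m : ℕ => iterZ f ((l : ℤ) * m) z) atTop (𝓝 p) := by
    have h2 := Tendsto.comp hz ht
    simp only [Function.comp_def, iterZ_mul_fix f l p hfix] at h2
    rw [tendsto_iff_dist_tendsto_zero]
    simpa only [dist_comm] using h2
  obtain ⟨m, hm⟩ := (h1.eventually (eventually_mem_nhds_iff.2 hnhd)).exists
  have h3 := (iterZ_cont f ((l : ℤ) * m)).continuousAt.preimage_mem_nhds hm
  refine mem_of_superset h3 ?_
  intro w hw
  have hw' : iterZ f ((l : ℤ) * m) w ∈ Ws f p := hsub hw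
  have h4 := Tendsto.comp hw' (tendsto_atTop_add_const_right atTop (-((l : ℤ) * m)) tendsto_id)
  refine Tendsto.congr ?_ h4
  intro k
  simp only [Function.comp_def, id]
  rw [← iterZ_add]
  conv_lhs => rw [← iterZ_mul_fix f l p hfix m]
  rw [← iterZ_add]
  simp

lemma Wu_iter (f : M ≃ₜ M) {p z : M} {j : ℤ} (hj : iterZ f j p = p) (hz : z ∈ Wu f p) :
    iterZ f j z ∈ Wu f p := by
  have h4 := Tendsto.comp hz (tendsto_atBot_add_const_right atBot j tendsto_id)
  refine Tendsto.congr ?_ h4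
  intro k
  simp only [Function.comp_def, id]
  rw [iterZ_add, iterZ_add, hj]

/-- Two unstable connected sets leaving a small ball. -/
lemma rays (f : M ≃ₜ M) {n r : ℕ} (hr : r < n) {p : M} (hp : p ∈ PerHr f n r)
    {α ε ν : ℝ} {x : M} (hexp : IsExpansive f α) (hε : ε < α)
    (hU : UpSet f x ν p ⊆ WuLoc f ε p) {y : M} {c : ℝ} (hpy : dist p y < c)
    (hball : closedBall y c ⊆ ball x ν) :
    ∃ H₁ H₂ : Set M, (IsPreconnected H₁ ∧ p ∈ H₁ ∧ H₁ ⊆ UpSet f x ν p ∧ ∃ a ∈ H₁, dist a y = c) ∧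
      (IsPreconnected H₂ ∧ p ∈ H₂ ∧ H₂ ⊆ UpSet f x ν p ∧ ∃ a ∈ H₂, dist a y = c) ∧
      H₁ ∩ H₂ ⊆ {p} := by
  obtain ⟨l, hl, hfix, φ, R, hR, hc, h0, hinj, hback, hfwd, -⟩ := chart_lemma f hp
  have hpB : p ∈ ball x ν := hball (mem_closedBall.2 hpy.le)
  have hiter : ∀ v ∈ closedBall (0 : ModelSp n r) R, v.1 = 0 → ∀ m : ℕ,
      iterZ f (-(l : ℤ) * m) (φ v) = φ ((1 / 2 : ℝ) ^ m • v) := by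
    intro v hv hv1 m
    refine iter_half f φ (-l) R (fun v => v.1 = 0) (fun v hv => by simp [hv]) ?_ v hv hv1 m
    intro w hw hw1
    refine hback w hw _ ?_
    refine Prod.ext (funext fun i => ?_) (funext fun i => ?_)
    · simp [modelL, hw1]
    · simp [modelL]
  have hWu : ∀ v ∈ closedBall (0 : ModelSp n r) R, v.1 = 0 → φ v ∈ Wu f p := by
    intro v hv hv1
    rw [mem_Wu_iff]
    have hneg : iterZ f.symm l p = p := by
      rw [iterZ_symm]
      conv_lhs => rw [← hfix]
      rw [← iterZ_add]; simp [iterZ]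
    apply mem_Ws_of_tendsto f.symm hl hneg
    have : ∀ m : ℕ, iterZ f.symm ((l : ℤ) * m) (φ v) = φ ((1 / 2 : ℝ) ^ m • v) := by
      intro m
      rw [iterZ_symm, ← hiter v hv hv1 m, neg_mul]
    simp only [this]
    rw [← h0]
    exact tendsto_half φ R hR hc v
  -- one direction
  have hray : ∀ v ∈ closedBall (0 : ModelSp n r) R, v.1 = 0 → v ≠ 0 →
      ∃ (k : ℕ) (t₀ : ℝ), 0 ≤ t₀ ∧ t₀ ≤ 1 ∧
        ((fun t : ℝ => iterZ f ((l : ℤ) * k) (φ (t • v))) '' Icc 0 t₀) ⊆ UpSet f x ν p ∧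
        IsPreconnected ((fun t : ℝ => iterZ f ((l : ℤ) * k) (φ (t • v))) '' Icc 0 t₀) ∧
        dist (iterZ f ((l : ℤ) * k) (φ (t₀ • v))) y = c := by
    intro v hv hv1 hv0
    have htv : ∀ t ∈ Icc (0 : ℝ) 1, t • v ∈ closedBall (0 : ModelSp n r) R := by
      intro t ht
      rw [mem_closedBall_zero_iff] at hv ⊢
      rw [norm_smul, Real.norm_of_nonneg ht.1]
      nlinarith [norm_nonneg v, ht.2]
    have hcg : ∀ k : ℕ, ContinuousOn (fun t : ℝ => iterZ f ((l : ℤ) * k) (φ (t • v)))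
        (Icc 0 1) := by
      intro k
      refine (iterZ_cont f _).comp_continuousOn (hc.comp ?_ htv)
      exact (continuous_id.smul continuous_const).continuousOn
    have hg0 : ∀ k : ℕ, iterZ f ((l : ℤ) * k) (φ ((0 : ℝ) • v)) = p := by
      intro k
      rw [zero_smul, h0, iterZ_mul_fix f l p hfix]
    have hpre : ∀ (k : ℕ) (t₀ : ℝ), t₀ ≤ 1 →
        IsPreconnected ((fun t : ℝ => iterZ f ((l : ℤ) * k) (φ (t • v))) '' Icc 0 t₀) :=
      fun k t₀ h1 => isPreconnected_Icc.image _ ((hcg k).mono (Icc_subset_Icc_right h1))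
    have hsub : ∀ (k : ℕ) (t₀ : ℝ), 0 ≤ t₀ → t₀ ≤ 1 →
        (∀ t ∈ Icc 0 t₀, dist (iterZ f ((l : ℤ) * k) (φ (t • v))) y ≤ c) →
        ((fun t : ℝ => iterZ f ((l : ℤ) * k) (φ (t • v))) '' Icc 0 t₀) ⊆ UpSet f x ν p := by
      intro k t₀ ht0 ht1 hd
      refine (hpre k t₀ ht1).subset_connectedComponentIn ⟨0, ⟨le_rfl, ht0⟩, hg0 k⟩ ?_
      rintro _ ⟨t, ht, rfl⟩
      refine ⟨?_, hball (mem_closedBall.2 (hd t ht))⟩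
      refine Wu_iter f (iterZ_mul_fix f l p hfix k) (hWu _ (htv t ⟨ht.1, ht.2.trans ht1⟩) ?_)
      simp [hv1]
    have hex : ∃ k : ℕ, ∃ t ∈ Icc (0 : ℝ) 1, c ≤ dist (iterZ f ((l : ℤ) * k) (φ (t • v))) y := by
      by_contra! hcon
      have hall : ∀ k : ℕ, iterZ f ((l : ℤ) * k) (φ v) ∈ WuLoc f ε p := by
        intro k
        refine hU (hsub k 1 zero_le_one le_rfl (fun t ht => (hcon k t ht).le) ⟨1, ?_, ?_⟩)
        · exact ⟨zero_le_one, le_rfl⟩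
        · simp only [one_smul]
      have hne : p ≠ φ v := by
        intro h
        rw [← h0] at h
        exact hv0 (hinj (mem_closedBall_self hR.le) hv h).symm
      obtain ⟨i, hi⟩ := hexp _ _ hne
      have h5 := hall i.natAbs (i - l * i.natAbs) (by
        have : (i.natAbs : ℤ) ≤ l * i.natAbs := by
          have : (1 : ℤ) ≤ l := by exact_mod_cast hl
          nlinarith [Int.natCast_nonneg i.natAbs]
        omega)
      rw [← iterZ_add, sub_add_cancel] at h5
      have h6 : iterZ f (i - l * i.natAbs) p = iterZ f i p := by
        conv_lhs => rw [← iterZ_mul_fix f l p hfix i.natAbs]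
        rw [← iterZ_add, sub_add_cancel]
      rw [h6] at h5
      linarith
    obtain ⟨k, t₁, ht₁, hct₁⟩ := hex
    have hcs : ContinuousOn (fun t : ℝ => dist (iterZ f ((l : ℤ) * k) (φ (t • v))) y) (Icc 0 1) :=
      fun t ht => Filter.Tendsto.dist (hcg k t ht) tendsto_const_nhds
    have hclosed : IsCompact (Icc (0 : ℝ) 1 ∩
        (fun t : ℝ => dist (iterZ f ((l : ℤ) * k) (φ (t • v))) y) ⁻¹' Ici c) :=
      isCompact_Icc.of_isClosed_subset (hcs.preimage_isClosed_of_isClosed isClosed_Icc isClosed_Ici)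
        inter_subset_left
    obtain ⟨t₀, ⟨ht₀, hct₀⟩, hleast⟩ := hclosed.exists_isLeast ⟨t₁, ht₁, hct₁⟩
    have hlt : ∀ t ∈ Icc (0 : ℝ) t₀, t ≠ t₀ →
        dist (iterZ f ((l : ℤ) * k) (φ (t • v))) y < c := by
      intro t ht hne
      by_contra! hge
      exact hne (le_antisymm ht.2 (hleast ⟨⟨ht.1, ht.2.trans ht₀.2⟩, hge⟩))
    have heq : dist (iterZ f ((l : ℤ) * k) (φ (t₀ • v))) y = c := by
      obtain ⟨t, ht, hteq⟩ := intermediate_value_Icc ht₀.1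
        (hcs.mono (Icc_subset_Icc_right ht₀.2)) (show c ∈ Icc _ _ from
          ⟨by simp only [hg0]; exact hpy.le, hct₀⟩)
      by_cases hne : t = t₀
      · rw [← hne]; exact hteq
      · exact absurd hteq (hlt t ht hne).ne
    refine ⟨k, t₀, ht₀.1, ht₀.2, hsub k t₀ ht₀.1 ht₀.2 ?_, hpre k t₀ ht₀.2, heq⟩
    intro t ht
    by_cases hne : t = t₀
    · rw [hne]; exact heq.le
    · exact (hlt t ht hne).le
  have hi : 0 < n - r := by omega
  set v : ModelSp n r := (0, fun _ => R) with hvdef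
  have hv : v ∈ closedBall (0 : ModelSp n r) R := by
    rw [mem_closedBall_zero_iff, norm_prod_le_iff]
    refine ⟨by simp [hvdef, hR.le], ?_⟩
    rw [pi_norm_le_iff_of_nonneg hR.le]
    intro i
    simp [hvdef, abs_of_pos hR]
  have hv0 : v ≠ 0 := by
    intro h
    have := congrFun (congrArg Prod.snd h) ⟨0, hi⟩
    simp [hvdef] at this
    exact hR.ne' this
  have hnv : -v ∈ closedBall (0 : ModelSp n r) R := by
    rw [mem_closedBall_zero_iff] at hv ⊢
    rwa [norm_neg]
  have hv1 : v.1 = 0 := rfl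
  have hnv1 : (-v).1 = 0 := by simp [hvdef]
  obtain ⟨k₁, t₁, a1, a2, a3, a4, a5⟩ := hray v hv hv1 hv0
  obtain ⟨k₂, t₂, b1, b2, b3, b4, b5⟩ := hray (-v) hnv hnv1 (neg_ne_zero.2 hv0)
  have hg0 : ∀ (k : ℕ) (w : ModelSp n r), iterZ f ((l : ℤ) * k) (φ ((0 : ℝ) • w)) = p := by
    intro k w
    rw [zero_smul, h0, iterZ_mul_fix f l p hfix]
  refine ⟨_, _, ⟨a4, ⟨0, ⟨le_rfl, a1⟩, hg0 _ _⟩, a3, _, ⟨t₁, ⟨a1, le_rfl⟩, rfl⟩, a5⟩,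
    ⟨b4, ⟨0, ⟨le_rfl, b1⟩, hg0 _ _⟩, b3, _, ⟨t₂, ⟨b1, le_rfl⟩, rfl⟩, b5⟩, ?_⟩
  rintro z ⟨⟨s, hs, rfl⟩, ⟨u, hu, hsu⟩⟩
  simp only at hsu
  have hmem : ∀ w ∈ closedBall (0 : ModelSp n r) R, ∀ t : ℝ, 0 ≤ t → t ≤ 1 →
      t • w ∈ closedBall (0 : ModelSp n r) R := by
    intro w hw t h1 h2
    rw [mem_closedBall_zero_iff] at hw ⊢
    rw [norm_smul, Real.norm_of_nonneg h1]
    nlinarith [norm_nonneg w]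
  have hsmem := hmem v hv s hs.1 (hs.2.trans a2)
  have humem := hmem (-v) hnv u hu.1 (hu.2.trans b2)
  have happ := congrArg (iterZ f (-(l : ℤ) * ((k₁ + k₂ : ℕ) : ℤ))) hsu
  rw [← iterZ_add, ← iterZ_add] at happ
  have e1 : -(l : ℤ) * ((k₁ + k₂ : ℕ) : ℤ) + l * k₂ = -(l : ℤ) * k₁ := by push_cast; ring
  have e2 : -(l : ℤ) * ((k₁ + k₂ : ℕ) : ℤ) + l * k₁ = -(l : ℤ) * k₂ := by push_cast; ring
  rw [e1, e2, hiter _ humem (by simp [hvdef]), hiter _ hsmem (by simp [hvdef])] at happ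
  have hpow : ∀ k : ℕ, (0 : ℝ) ≤ (1 / 2) ^ k ∧ ((1 : ℝ) / 2) ^ k ≤ 1 := fun k =>
    ⟨by positivity, pow_le_one₀ (by norm_num) (by norm_num)⟩
  have hh := hinj (hmem _ humem _ (hpow k₁).1 (hpow k₁).2)
    (hmem _ hsmem _ (hpow k₂).1 (hpow k₂).2) happ
  have hh2 := congrFun (congrArg Prod.snd hh) ⟨0, hi⟩
  simp only [hvdef, Prod.smul_snd, Pi.smul_apply, smul_eq_mul, Prod.snd_neg, Pi.neg_apply] at hh2
  have hs0 : s = 0 := by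
    have p1 : (0 : ℝ) < (1 / 2) ^ k₂ := by positivity
    have q1 : 0 ≤ (1 / 2 : ℝ) ^ k₁ * (u * R) := by
      have := hu.1
      positivity
    have q2 : (1 / 2 : ℝ) ^ k₂ * (s * R) ≤ 0 := by linarith
    by_contra hne
    have : 0 < s := lt_of_le_of_ne hs.1 (Ne.symm hne)
    have : 0 < (1 / 2 : ℝ) ^ k₂ * (s * R) := by positivity
    linarith
  simp only [mem_singleton_iff]
  rw [hs0]; exact hg0 _ _


lemma isClosed_WsLoc (f : M ≃ₜ M) (ε : ℝ) (p : M) : IsClosed (WsLoc f ε p) := by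
  have : WsLoc f ε p = ⋂ k : ℤ, ⋂ _ : 0 ≤ k, {y | dist (iterZ f k p) (iterZ f k y) ≤ ε} := by
    ext y; simp [WsLoc]
  rw [this]
  refine isClosed_iInter fun k => isClosed_iInter fun _ => ?_
  exact isClosed_le (continuous_const.dist (iterZ_cont f k)) continuous_const

lemma self_mem_Sp (f : M ≃ₜ M) {x p : M} {ν : ℝ} (hp : p ∈ ball x ν) : p ∈ SpSet f x ν p :=
  mem_connectedComponentIn ⟨self_mem_Ws f p, hp⟩

lemma Sp_sub (f : M ≃ₜ M) (x p : M) (ν : ℝ) : SpSet f x ν p ⊆ Ws f p ∩ ball x ν :=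
  connectedComponentIn_subset _ _

lemma Sp_closed [CompactSpace M] (f : M ≃ₜ M) {α ε ν : ℝ} {x p : M} (hexp : IsExpansive f α)
    (hε : ε < α) (hp : p ∈ ball x ν) (hS : SpSet f x ν p ⊆ WsLoc f ε p) :
    closure (SpSet f x ν p) ∩ ball x ν ⊆ SpSet f x ν p := by
  have h1 : IsPreconnected (closure (SpSet f x ν p) ∩ ball x ν) := by
    refine IsPreconnected.subset_closure isPreconnected_connectedComponentIn ?_ inter_subset_left
    exact fun z hz => ⟨subset_closure hz, (Sp_sub f x p ν hz).2⟩
  refine h1.subset_connectedComponentIn ⟨subset_closure (self_mem_Sp f hp), hp⟩ ?_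
  rintro z ⟨hz, hzB⟩
  exact ⟨WsLoc_sub_Ws f hexp hε p (closure_minimal hS (isClosed_WsLoc f ε p) hz), hzB⟩

lemma diff_open [CompactSpace M] (f : M ≃ₜ M) {α ε ν : ℝ} {x p : M} (hexp : IsExpansive f α)
    (hε : ε < α) (hp : p ∈ ball x ν) (hS : SpSet f x ν p ⊆ WsLoc f ε p) :
    IsOpen (ball x ν \ SpSet f x ν p) := by
  have : ball x ν \ SpSet f x ν p = ball x ν \ closure (SpSet f x ν p) := by
    ext z
    constructor
    · rintro ⟨h1, h2⟩
      exact ⟨h1, fun h => h2 (Sp_closed f hexp hε hp hS ⟨h, h1⟩)⟩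
    · rintro ⟨h1, h2⟩
      exact ⟨h1, fun h => h2 (subset_closure h)⟩
  rw [this]
  exact isOpen_ball.sdiff isClosed_closure

lemma Shat_diff_open [LocallyConnectedSpace M] (f : M ≃ₜ M) {ν : ℝ} {x p : M}
    (ho : IsOpen (ball x ν \ SpSet f x ν p)) : IsOpen (ShatSet f x ν p \ SpSet f x ν p) := by
  rw [isOpen_iff_mem_nhds]
  rintro z ⟨⟨hz1, hz2⟩, hz3⟩
  have hz : z ∈ ball x ν \ SpSet f x ν p := ⟨hz1, hz3⟩
  refine mem_of_superset (ho.connectedComponentIn.mem_nhds (mem_connectedComponentIn hz)) ?_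
  intro w hw
  have hw' := connectedComponentIn_subset _ _ hw
  refine ⟨⟨hw'.1, fun h => hz2 ?_⟩, hw'.2⟩
  rw [connectedComponentIn_eq h, ← connectedComponentIn_eq hw]
  exact mem_connectedComponentIn hz

/-- A connected set meeting both `A_q` and its complement meets `S_q`. -/
lemma cross (f : M ≃ₜ M) {ν : ℝ} {x q : M} {N : Set M} (hN : IsPreconnected N)
    (hNB : N ⊆ ball x ν) {a b : M} (ha : a ∈ N) (haS : a ∉ ShatSet f x ν q) (hb : b ∈ N)
    (hbS : b ∈ ShatSet f x ν q) : ∃ s ∈ N, s ∈ SpSet f x ν q := by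
  by_contra! hcon
  have haA : a ∈ connectedComponentIn (ball x ν \ SpSet f x ν q) x := by
    by_contra h
    exact haS ⟨hNB ha, h⟩
  have hsub : N ⊆ ball x ν \ SpSet f x ν q := fun z hz => ⟨hNB hz, hcon z hz⟩
  have := hN.subset_connectedComponentIn ha hsub hb
  rw [← connectedComponentIn_eq haA] at this
  exact hbS.2 this

lemma Sp_sub_Shat (f : M ≃ₜ M) (x q : M) (ν : ℝ) : SpSet f x ν q ⊆ ShatSet f x ν q :=
  fun _ hz => ⟨(Sp_sub f x q ν hz).2, fun h => (connectedComponentIn_subset _ _ h).2 hz⟩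

/-- **Lemma.** `int(S_{[p]}) ∩ B_δ(x) = (⋃_{q ∈ [p]} Ŝ_q) ∩ B_δ(x)`. -/
theorem stmt14
    {M : Type*} [MetricSpace M] [CompactSpace M] [ConnectedSpace M]
    (n : ℕ) [ChartedSpace (EuclideanSpace ℝ (Fin n)) M]
    (f : M ≃ₜ M) (α : ℝ) (hα : 0 < α) (hexp : IsExpansive f α)
    (x : M) (hx : ¬ AdmitsLPS f n x)
    (ε : ℝ) (hε : 0 < ε) (hεα : 2 * ε < α) (ν : ℝ) (hν : 0 < ν)
    (hi : ∀ p ∈ PerH f n ∩ Metric.ball x ν,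
      SpSet f x ν p ⊆ WsLoc f ε p ∧ UpSet f x ν p ⊆ WuLoc f ε p)
    (hii : ∀ p ∈ PerHr f n (n - 1) ∩ Metric.ball x ν,
      ∃ V₁ V₂ : Set M, TwoComponents (Metric.ball x ν \ SpSet f x ν p) V₁ V₂)
    (hdense : closure (PerH f n) = Set.univ)
    (δ : ℝ) (hδ : δ ∈ Set.Ioo (0 : ℝ) ν)
    (hfin : {C : Set M | IsMaxChainIn f n x ν δ C}.Finite)
    (hdisj : ∀ C₁ C₂ : Set M, IsMaxChainIn f n x ν δ C₁ → IsMaxChainIn f n x ν δ C₂ →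
      C₁ ≠ C₂ → Disjoint C₁ C₂)
    (hacc : ∀ C : Set M, IsMaxChainIn f n x ν δ C → x ∈ closure C)
    :
    ∀ p ∈ Xdelta f n x δ, ∀ C : Set M, IsMaxChainIn f n x ν δ C → p ∈ C →
      interior (closure (⋃ q ∈ C, ShatSet f x ν q)) ∩ Metric.ball x δ =
        (⋃ q ∈ C, ShatSet f x ν q) ∩ Metric.ball x δ := by
  intro p₀ hp₀ C hC hp₀C
  haveI : LocallyConnectedSpace M := ChartedSpace.locallyConnectedSpace (EuclideanSpace ℝ (Fin n)) M
  have hεα' : ε < α := by linarith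
  have hBB : ball x δ ⊆ ball x ν := ball_subset_ball hδ.2.le
  set O : Set M := ⋃ q ∈ C, ShatSet f x ν q with hO
  have hCX : ∀ q ∈ C, q ∈ PerHr f n (n - 1) ∧ q ∈ ball x ν := fun q hq =>
    ⟨(hC.1.1 hq).1, hBB (hC.1.1 hq).2⟩
  have hPH : ∀ q ∈ PerHr f n (n - 1), q ∈ PerH f n := by
    intro q hq
    simp only [PerH, mem_iUnion]
    exact ⟨n - 1, Finset.mem_range.2 (by omega), hq⟩
  have hOsub : ∀ q ∈ C, ShatSet f x ν q ⊆ O := fun q hq z hz => mem_iUnion₂.2 ⟨q, hq, hz⟩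
  by_cases hxS : ∃ q ∈ C, x ∈ SpSet f x ν q
  · obtain ⟨q, hq, hxq⟩ := hxS
    have hB : ball x δ ⊆ O := by
      intro z hz
      refine hOsub q hq ⟨hBB hz, ?_⟩
      rw [connectedComponentIn_eq_empty (fun h => h.2 hxq)]
      exact notMem_empty z
    have h1 : ball x δ ⊆ interior (closure O) :=
      interior_maximal (hB.trans subset_closure) isOpen_ball
    rw [inter_eq_right.2 h1, inter_eq_right.2 hB]
  push Not at hxS
  have hSq : ∀ q ∈ C, SpSet f x ν q ⊆ WsLoc f ε q := fun q hq =>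
    (hi q ⟨hPH q (hCX q hq).1, (hCX q hq).2⟩).1
  have hdo : ∀ q ∈ C, IsOpen (ball x ν \ SpSet f x ν q) := fun q hq =>
    diff_open f hexp hεα' (hCX q hq).2 (hSq q hq)
  have hAo : ∀ q ∈ C, IsOpen (connectedComponentIn (ball x ν \ SpSet f x ν q) x) := fun q hq =>
    (hdo q hq).connectedComponentIn
  have hxA : ∀ q ∈ C, x ∈ connectedComponentIn (ball x ν \ SpSet f x ν q) x := fun q hq =>
    mem_connectedComponentIn ⟨mem_ball_self hν, hxS q hq⟩
  have hper : ∀ p ∈ PerH f n, ∃ l : ℕ, 1 ≤ l ∧ iterZ f l p = p := by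
    intro p hp
    simp only [PerH, mem_iUnion] at hp
    obtain ⟨r, -, hr⟩ := hp
    exact PerHr_periodic f hr
  have hSeq : ∀ p ∈ PerH f n, ∀ q ∈ PerH f n, ∀ s, s ∈ SpSet f x ν p → s ∈ SpSet f x ν q →
      p = q := by
    intro p hp q hq s hsp hsq
    obtain ⟨l1, h1, h2⟩ := hper p hp
    obtain ⟨l2, h3, h4⟩ := hper q hq
    exact periodic_Ws_eq f h1 h3 h2 h4 (Ws_common f (Sp_sub f x p ν hsp).1 (Sp_sub f x q ν hsq).1)
  -- strictly larger elements of the chain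
  have hnext : ∀ q ∈ C, ∃ q' ∈ C, q' ≠ q ∧ ShatSet f x ν q ⊆ ShatSet f x ν q' \ SpSet f x ν q' := by
    intro q hq
    obtain ⟨q', hq'A, hq'⟩ := mem_closure_iff.1 (hacc C hC) _ (hAo q hq) (hxA q hq)
    have hq'n : q' ∉ ShatSet f x ν q := fun h => h.2 hq'A
    have hq's : q' ∈ SpSet f x ν q' := self_mem_Sp f (hCX q' hq').2
    have hne : q' ≠ q := by
      rintro rfl
      exact hq'n (Sp_sub_Shat f x q' ν hq's)
    have hsub : ShatSet f x ν q ⊆ ShatSet f x ν q' := by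
      rcases hC.1.2 q hq q' hq' with h | h
      · exact h
      · exact absurd (h (Sp_sub_Shat f x q' ν hq's)) hq'n
    refine ⟨q', hq', hne, fun z hz => ⟨hsub hz, fun hzS => ?_⟩⟩
    -- `S_q'` is connected, contains `z ∈ Ŝ_q` and `q' ∉ Ŝ_q`
    obtain ⟨s, hs1, hs2⟩ := cross f (N := SpSet f x ν q') isPreconnected_connectedComponentIn
      (fun w hw => (Sp_sub f x q' ν hw).2) hq's hq'n hzS hz
    exact hne (hSeq q' (hPH q' (hCX q' hq').1) q (hPH q (hCX q hq).1) s hs1 hs2)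
  have hOo : IsOpen O := by
    rw [isOpen_iff_mem_nhds]
    intro z hz
    obtain ⟨q, hq, hzq⟩ := mem_iUnion₂.1 hz
    obtain ⟨q', hq', -, hsub⟩ := hnext q hq
    exact mem_of_superset ((Shat_diff_open f (hdo q' hq')).mem_nhds (hsub hzq))
      (fun w hw => hOsub q' hq' hw.1)
  have hjoin : ∀ a ∈ O, ∀ b ∈ O, ∃ q ∈ C, a ∈ ShatSet f x ν q ∧ b ∈ ShatSet f x ν q := by
    intro a ha b hb
    obtain ⟨q, hq, haq⟩ := mem_iUnion₂.1 ha
    obtain ⟨q', hq', hbq⟩ := mem_iUnion₂.1 hb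
    rcases hC.1.2 q hq q' hq' with h | h
    · exact ⟨q', hq', h haq, hbq⟩
    · exact ⟨q, hq, haq, h hbq⟩
  apply subset_antisymm
  swap
  · rintro z ⟨hz, hzB⟩
    exact ⟨interior_maximal subset_closure hOo hz, hzB⟩
  rintro y ⟨hy, hyB⟩
  refine ⟨?_, hyB⟩
  by_contra hyO
  obtain ⟨c, hc, hcs⟩ := Metric.nhds_basis_closedBall.mem_iff.1
    ((isOpen_interior.inter isOpen_ball).mem_nhds (⟨hy, hyB⟩ :
      y ∈ interior (closure O) ∩ ball x δ))
  have hcB : closedBall y c ⊆ ball x ν := fun z hz => hBB (hcs hz).2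
  -- connected neighbourhoods of points of the frontier
  have hnbhd : ∀ z ∈ closedBall y c, ∀ η > 0, ∃ N : Set M, IsOpen N ∧ z ∈ N ∧ IsPreconnected N ∧
      N ⊆ ball x ν ∧ N ⊆ ball z η := by
    intro z hz η hη
    obtain ⟨N, hN, ho, hzN, hconn⟩ := (locallyConnectedSpace_iff_subsets_isOpen_isConnected.1 ‹_›) z
      (ball x ν ∩ ball z η)
      (inter_mem (isOpen_ball.mem_nhds (hcB hz)) (ball_mem_nhds z hη))
    exact ⟨N, ho, hzN, hconn.isPreconnected, fun w hw => (hN hw).1, fun w hw => (hN hw).2⟩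
  -- the frontier lies in a single local stable set
  have hF : ∀ z ∈ closedBall y c, z ∉ O → z ∈ WsLoc f (2 * ε) y := by
    intro z hz hzO j hj
    have hseq : ∀ m : ℕ, ∃ a b : M, dist a y < 1 / ((m : ℝ) + 1) ∧ dist b z < 1 / ((m : ℝ) + 1) ∧
        dist (iterZ f j a) (iterZ f j b) ≤ 2 * ε := by
      intro m
      have hη : (0 : ℝ) < 1 / ((m : ℝ) + 1) := Nat.one_div_pos_of_nat
      obtain ⟨N₁, o1, m1, c1, s1, d1⟩ := hnbhd y (mem_closedBall_self hc.le) _ hη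
      obtain ⟨N₂, o2, m2, c2, s2, d2⟩ := hnbhd z hz _ hη
      obtain ⟨w1, hw1, hw1O⟩ := mem_closure_iff.1 (interior_subset hy) N₁ o1 m1
      obtain ⟨w2, hw2, hw2O⟩ := mem_closure_iff.1 (interior_subset (hcs hz).1) N₂ o2 m2
      obtain ⟨q, hq, h1, h2⟩ := hjoin w1 hw1O w2 hw2O
      obtain ⟨a, ha, haS⟩ := cross f c1 s1 m1 (fun h => hyO (hOsub q hq h)) hw1 h1
      obtain ⟨b, hb, hbS⟩ := cross f c2 s2 m2 (fun h => hzO (hOsub q hq h)) hw2 h2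
      refine ⟨a, b, d1 ha, d2 hb, ?_⟩
      have e1 := hSq q hq haS j hj
      have e2 := hSq q hq hbS j hj
      have := dist_triangle_left (iterZ f j a) (iterZ f j b) (iterZ f j q)
      linarith
    choose a b ha hb hab using hseq
    have ta : Tendsto a atTop (𝓝 y) := tendsto_iff_dist_tendsto_zero.2
      (squeeze_zero (fun _ => dist_nonneg) (fun m => (ha m).le) tendsto_one_div_add_atTop_nhds_zero_nat)
    have tb : Tendsto b atTop (𝓝 z) := tendsto_iff_dist_tendsto_zero.2
      (squeeze_zero (fun _ => dist_nonneg) (fun m => (hb m).le) tendsto_one_div_add_atTop_nhds_zero_nat)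
    exact le_of_tendsto' ((((iterZ_cont f j).tendsto y).comp ta).dist
      (((iterZ_cont f j).tendsto z).comp tb)) hab
  -- no sinks near `y`
  obtain ⟨N₀, hN₀o, hyN₀, hN₀c, hN₀B, hN₀b⟩ := hnbhd y (mem_closedBall_self hc.le) c hc
  have hnosink : ∀ p ∈ N₀, ∀ r, r < n + 1 → p ∈ PerHr f n r → r < n := by
    intro p hpN r hr hpr
    by_contra hnr
    have hpH : p ∈ PerH f n := by
      simp only [PerH, mem_iUnion]
      exact ⟨r, Finset.mem_range.2 hr, hpr⟩
    have hpB : p ∈ ball x ν := hN₀B hpN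
    have hWo : IsOpen (Ws f p) := sink_open f (not_lt.1 hnr) hpr
    have hSo : IsOpen (SpSet f x ν p) := (hWo.inter isOpen_ball).connectedComponentIn
    have hDo := diff_open f hexp hεα' hpB (hi p ⟨hpH, hpB⟩).1
    have hsubS : N₀ ⊆ SpSet f x ν p := by
      intro z hz
      by_contra hzS
      obtain ⟨w, -, hw1, hw2⟩ := hN₀c _ _ hSo hDo
        (fun w hw => by
          by_cases h : w ∈ SpSet f x ν p
          · exact Or.inl h
          · exact Or.inr ⟨hN₀B hw, h⟩)
        ⟨p, hpN, self_mem_Sp f hpB⟩ ⟨z, hz, hN₀B hz, hzS⟩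
      exact hw2.2 hw1
    obtain ⟨w, hw, hwO⟩ := mem_closure_iff.1 (interior_subset hy) N₀ hN₀o hyN₀
    obtain ⟨q, hq, hwq⟩ := mem_iUnion₂.1 hwO
    obtain ⟨q', hq', hne, hsub⟩ := hnext q hq
    have hall : ∀ q ∈ C, w ∈ ShatSet f x ν q → p = q := by
      intro q hq hwq
      obtain ⟨s, hs, hsS⟩ := cross f hN₀c hN₀B hyN₀ (fun h => hyO (hOsub q hq h)) hw hwq
      exact hSeq p hpH q (hPH q (hCX q hq).1) s (hsubS hs) hsS
    exact hne ((hall q' hq' (hsub hwq).1).symm.trans (hall q hq hwq))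
  -- periodic points approaching `y`, with their unstable rays
  have hseq : ∀ m : ℕ, ∃ (p a b : M) (H₁ H₂ : Set M), p ∈ PerH f n ∧ p ∈ ball x ν ∧
      dist p y < 1 / ((m : ℝ) + 1) ∧
      (IsPreconnected H₁ ∧ p ∈ H₁ ∧ H₁ ⊆ UpSet f x ν p ∧ a ∈ H₁ ∧ dist a y = c) ∧
      (IsPreconnected H₂ ∧ p ∈ H₂ ∧ H₂ ⊆ UpSet f x ν p ∧ b ∈ H₂ ∧ dist b y = c) ∧
      H₁ ∩ H₂ ⊆ {p} := by
    intro m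
    have hη : (0 : ℝ) < 1 / ((m : ℝ) + 1) := Nat.one_div_pos_of_nat
    have hycl : y ∈ closure (PerH f n) := by rw [hdense]; exact mem_univ y
    obtain ⟨p, ⟨hpN, hpm⟩, hpH⟩ := mem_closure_iff.1 hycl _ (hN₀o.inter isOpen_ball)
      ⟨hyN₀, mem_ball_self hη⟩
    have hpH' := hpH
    simp only [PerH, mem_iUnion] at hpH'
    obtain ⟨r, hr, hpr⟩ := hpH'
    have hrn := hnosink p hpN r (Finset.mem_range.1 hr) hpr
    obtain ⟨H₁, H₂, ⟨a1, a2, a3, a, a4, a5⟩, ⟨b1, b2, b3, b, b4, b5⟩, h12⟩ :=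
      rays f hrn hpr hexp hεα' (hi p ⟨hpH, hN₀B hpN⟩).2 (y := y) (c := c) (hN₀b hpN) hcB
    exact ⟨p, a, b, H₁, H₂, hpH, hN₀B hpN, hpm, ⟨a1, a2, a3, a4, a5⟩, ⟨b1, b2, b3, b4, b5⟩, h12⟩
  choose P a b H₁ H₂ hPH' hPB hPy hH₁ hH₂ h12 using hseq
  have tP : Tendsto P atTop (𝓝 y) := tendsto_iff_dist_tendsto_zero.2
      (squeeze_zero (fun _ => dist_nonneg) (fun m => (hPy m).le) tendsto_one_div_add_atTop_nhds_zero_nat)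
  obtain ⟨⟨a', b'⟩, -, φ, hφ, hlim⟩ := isCompact_univ.tendsto_subseq
    (x := fun m : ℕ => ((a m, b m) : M × M)) (fun _ => mem_univ _)
  have ta : Tendsto (fun m => a (φ m)) atTop (𝓝 a') := (continuous_fst.tendsto _).comp hlim
  have tb : Tendsto (fun m => b (φ m)) atTop (𝓝 b') := (continuous_snd.tendsto _).comp hlim
  have tP' : Tendsto (fun m => P (φ m)) atTop (𝓝 y) := tP.comp hφ.tendsto_atTop
  have hUε : ∀ m, UpSet f x ν (P m) ⊆ WuLoc f ε (P m) := fun m => (hi _ ⟨hPH' m, hPB m⟩).2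
  have hlimO : ∀ (u : ℕ → M) (u' : M), Tendsto u atTop (𝓝 u') →
      (∀ m, u m ∈ UpSet f x ν (P (φ m))) → (∀ m, dist (u m) y = c) → u' ∈ O := by
    intro u u' hu hum huc
    have hd : dist u' y = c := by
      refine tendsto_nhds_unique (hu.dist tendsto_const_nhds) ?_
      simp only [huc]
      exact tendsto_const_nhds
    by_contra hu'O
    have h1 := hF u' (mem_closedBall.2 hd.le) hu'O
    have h2 : u' ∈ WuLoc f ε y := by
      intro j hj
      exact le_of_tendsto' ((((iterZ_cont f j).tendsto y).comp tP').dist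
        (((iterZ_cont f j).tendsto u').comp hu)) (fun m => hUε _ (hum m) j hj)
    have hne : y ≠ u' := by
      rintro rfl
      rw [dist_self] at hd; linarith
    obtain ⟨j, hj⟩ := hexp y u' hne
    rcases le_total 0 j with h | h
    · have := h1 j h; linarith
    · have := h2 j h; linarith
  have ha'O := hlimO _ _ ta (fun m => (hH₁ (φ m)).2.2.1 (hH₁ (φ m)).2.2.2.1)
    (fun m => (hH₁ (φ m)).2.2.2.2)
  have hb'O := hlimO _ _ tb (fun m => (hH₂ (φ m)).2.2.1 (hH₂ (φ m)).2.2.2.1)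
    (fun m => (hH₂ (φ m)).2.2.2.2)
  obtain ⟨q₀, hq₀, haq₀, hbq₀⟩ := hjoin _ ha'O _ hb'O
  obtain ⟨q, hq, -, hsub⟩ := hnext q₀ hq₀
  have hIo := Shat_diff_open f (hdo q hq)
  have hyA : y ∈ connectedComponentIn (ball x ν \ SpSet f x ν q) x := by
    by_contra h
    exact hyO (hOsub q hq ⟨hBB hyB, h⟩)
  obtain ⟨m, hm1, hm2, hm3⟩ := ((ta.eventually (hIo.mem_nhds (hsub haq₀))).and
    ((tb.eventually (hIo.mem_nhds (hsub hbq₀))).and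
      (tP'.eventually ((hAo q hq).mem_nhds hyA)))).exists
  have hUB : UpSet f x ν (P (φ m)) ⊆ ball x ν := fun z hz => (connectedComponentIn_subset _ _ hz).2
  obtain ⟨c1, p1, s1, m1, -⟩ := hH₁ (φ m)
  obtain ⟨c2, p2, s2, m2, -⟩ := hH₂ (φ m)
  have hPn : P (φ m) ∉ ShatSet f x ν q := fun h => h.2 hm3
  obtain ⟨u, hu, huS⟩ := cross f c1 (s1.trans hUB) p1 hPn m1 hm1.1
  obtain ⟨w, hw, hwS⟩ := cross f c2 (s2.trans hUB) p2 hPn m2 hm2.1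
  have huw : u = w := by
    by_contra hne
    obtain ⟨j, hj⟩ := hexp u w hne
    rcases le_total 0 j with h | h
    · have e1 := hSq q hq huS j h
      have e2 := hSq q hq hwS j h
      have := dist_triangle_left (iterZ f j u) (iterZ f j w) (iterZ f j q)
      linarith
    · have e1 := hUε _ (s1 hu) j h
      have e2 := hUε _ (s2 hw) j h
      have := dist_triangle_left (iterZ f j u) (iterZ f j w) (iterZ f j (P (φ m)))
      linarith
  have : u ∈ ({P (φ m)} : Set M) := h12 (φ m) ⟨hu, huw ▸ hw⟩
  rw [mem_singleton_iff] at this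
  rw [this] at huS
  exact hPn (Sp_sub_Shat f x q ν huS)
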